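/- Let z : ℝ^N → ℝ^N, x* ∈ ℝ^N, and c ∈ (0,1) satisfy ‖z(x) − x*‖₂ ≤ c‖x − x*‖₂ for all x ∈ ℝ^N. Let ε(c) := log(c)/log((1−c)/(1+c)), let κ₁ > 0, κ₂ > 0, α₁ ∈ (1 − ε(c), 1) ∩ (0,1), and α₂ > 1. Define the vector field h : ℝ^N → ℝ^N by h(x) = −κ₁(x − z(x))/‖x − z(x)‖₂^(1−α₁) − κ₂(x − z(x))/‖x − z(x)‖₂^(1−α₂) for x ≠ x*, and h(x*) = 0. Set s₁ := (κ₁/(1−c)^(1−α₁))·(((1−c)/(1+c))^(1−α₁) − c), s₂ := (κ₂/(1−c)^(1−α₂))·(((1−c)/(1+c))^(1−α₂) − c), γ₁ := (1+α₁)/2, γ₂ := (1+α₂)/2, a₁ := 2^(γ₁)·s₁, a₂ := 2^(γ₂)·s₂, and T := 1/(a₁(1−γ₁)) + 1/(a₂(γ₂−1)). Then for any differentiable curve x : ℝ → ℝ^N satisfying x′(t) = h(x(t)) for all t ≥ 0, one has x(t) = x* for all t ≥ T. -/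

import Mathlib

/-!
The Lyapunov function `V = ‖x - x*‖ ^ 2 / 2` satisfies `V' ≤ -(b₁ V ^ γ₁ + b₂ V ^ γ₂)`, but the
rates `bᵢ` can be smaller than the `aᵢ` in `T`. What makes up for this is that both terms act at all
times, whereas `T` adds the times in which each would act alone. Choose `θ` with
`(1 - θ) γ₁ + θ γ₂ = 1`, so that the weighted geometric mean of the two powers of `V` is `V` itself.
Then the share `σ` of the second term in the total rate satisfies
`σ' ≤ -(γ₂ - γ₁) b₁ ^ (1 - θ) b₂ ^ θ σ ^ (1 - θ) (1 - σ) ^ θ`,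
and integrating shows that `V` vanishes before `T` as soon as
`(1 - 3 / 4 * θ (1 - θ)) a₁ ^ (1 - θ) a₂ ^ θ ≤ b₁ ^ (1 - θ) b₂ ^ θ`.
The gains cancel from this inequality, and the weighted geometric mean of the two powers of
`(1 - c) / (1 + c)` is `1`, which leaves an estimate in `c` and `θ`.
-/

/-- The weighted geometric mean of `a` and `b` in which `b` carries the weight `θ`. It is used to
compare pairs of decay rates: the settling time of a two-term decay depends on the two rates
through such a mean. -/
noncomputable def geomMean (θ a b : ℝ) : ℝ := a ^ (1 - θ) * b ^ θ

section geomMean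

variable {θ a b a' b' : ℝ}

lemma geomMean_pos (ha : 0 < a) (hb : 0 < b) : 0 < geomMean θ a b := by
  unfold geomMean
  positivity

lemma geomMean_mul (ha : 0 ≤ a) (hb : 0 ≤ b) (ha' : 0 ≤ a') (hb' : 0 ≤ b') :
    geomMean θ (a * a') (b * b') = geomMean θ a b * geomMean θ a' b' := by
  simp only [geomMean, Real.mul_rpow ha ha', Real.mul_rpow hb hb']
  ring

lemma geomMean_inv (ha : 0 ≤ a) (hb : 0 ≤ b) : geomMean θ a⁻¹ b⁻¹ = (geomMean θ a b)⁻¹ := by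
  simp only [geomMean, Real.inv_rpow ha, Real.inv_rpow hb, mul_inv]

lemma geomMean_self (ha : 0 < a) : geomMean θ a a = a := by
  rw [geomMean, ← Real.rpow_add ha, sub_add_cancel, Real.rpow_one]

lemma geomMean_mul_swap (ha : 0 < a) (hb : 0 < b) : geomMean θ a b * geomMean θ b a = a * b := by
  calc geomMean θ a b * geomMean θ b a = geomMean θ a a * geomMean θ b b := by
        simp only [geomMean]
        ring
    _ = a * b := by rw [geomMean_self ha, geomMean_self hb]

lemma geomMean_rpow_rpow (ha : 0 < a) (p q : ℝ) :
    geomMean θ (a ^ p) (a ^ q) = a ^ ((1 - θ) * p + θ * q) := by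
  rw [geomMean, ← Real.rpow_mul ha.le, ← Real.rpow_mul ha.le, ← Real.rpow_add ha]
  congr 1
  ring

variable (hθ : θ ∈ Set.Icc (0 : ℝ) 1)
include hθ

lemma geomMean_le_geomMean (ha : 0 ≤ a) (hb : 0 ≤ b) (haa' : a ≤ a') (hbb' : b ≤ b') :
    geomMean θ a b ≤ geomMean θ a' b' :=
  mul_le_mul (Real.rpow_le_rpow ha haa' (sub_nonneg.2 hθ.2))
    (Real.rpow_le_rpow hb hbb' hθ.1) (Real.rpow_nonneg hb _)
    (Real.rpow_nonneg (ha.trans haa') _)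

lemma geomMean_le_arithMean (ha : 0 ≤ a) (hb : 0 ≤ b) :
    geomMean θ a b ≤ (1 - θ) * a + θ * b :=
  Real.geom_mean_le_arith_mean2_weighted (sub_nonneg.2 hθ.2) hθ.1 ha hb (sub_add_cancel 1 θ)

lemma geomMean_add_geomMean_le (ha : 0 < a) (hb : 0 < b) (ha' : 0 < a') (hb' : 0 < b') :
    geomMean θ a b + geomMean θ a' b' ≤ geomMean θ (a + a') (b + b') := by
  have hA : 0 < a + a' := add_pos ha ha'
  have hB : 0 < b + b' := add_pos hb hb'
  have split_off {x y : ℝ} (hx : 0 < x) (hy : 0 < y) :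
      geomMean θ x y = geomMean θ (a + a') (b + b') *
        geomMean θ (x / (a + a')) (y / (b + b')) := by
    rw [← geomMean_mul hA.le hB.le (by positivity) (by positivity), mul_div_cancel₀ _ hA.ne',
      mul_div_cancel₀ _ hB.ne']
  have mean_le (x y : ℝ) (hx : 0 < x) (hy : 0 < y) :=
    geomMean_le_arithMean hθ (div_pos hx hA).le (div_pos hy hB).le
  calc geomMean θ a b + geomMean θ a' b'
      = geomMean θ (a + a') (b + b') * (geomMean θ (a / (a + a')) (b / (b + b')) +
          geomMean θ (a' / (a + a')) (b' / (b + b'))) := by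
        rw [split_off ha hb, split_off ha' hb', mul_add]
    _ ≤ geomMean θ (a + a') (b + b') * (((1 - θ) * (a / (a + a')) + θ * (b / (b + b'))) +
          ((1 - θ) * (a' / (a + a')) + θ * (b' / (b + b')))) := by
        gcongr
        · exact (geomMean_pos hA hB).le
        · exact mean_le a b ha hb
        · exact mean_le a' b' ha' hb'
    _ = geomMean θ (a + a') (b + b') := by
        field_simp
        ring

end geomMean

section SettlingTime

variable {θ σ : ℝ}

lemma rpow_neg_sub_one_le (hθ : θ ∈ Set.Icc (0 : ℝ) 1) (hσ : 0 < σ) :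
    σ ^ (-θ) - 1 ≤ θ * ((1 - σ) / σ) := by
  have bernoulli := rpow_one_add_le_one_add_mul_self (s := (1 - σ) / σ) (p := θ)
    (by rw [le_div_iff₀ hσ]; linarith) hθ.1 hθ.2
  rw [show 1 + (1 - σ) / σ = σ⁻¹ by field_simp; ring, Real.inv_rpow hσ.le,
    ← Real.rpow_neg hσ.le] at bernoulli
  linarith

-- By Bernoulli, the two excesses over `1` multiply to at most `θ (1 - θ) ≤ 1 / 4`.
lemma rpow_neg_mul_rpow_neg_le (hθ : θ ∈ Set.Icc (0 : ℝ) 1) (hσ : σ ∈ Set.Ioo (0 : ℝ) 1) :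
    σ ^ (-(1 - θ)) * (1 - σ) ^ (-θ) ≤ σ ^ (-(1 - θ)) + (1 - σ) ^ (-θ) - 3 / 4 := by
  have hθ' : 1 - θ ∈ Set.Icc (0 : ℝ) 1 := ⟨by linarith [hθ.2], by linarith [hθ.1]⟩
  have hσ' : 0 < 1 - σ := sub_pos.2 hσ.2
  have excess_nonneg : 0 ≤ (1 - σ) ^ (-θ) - 1 := sub_nonneg.2 <|
    Real.one_le_rpow_of_pos_of_le_one_of_nonpos hσ' (by linarith [hσ.1]) (by linarith [hθ.1])
  have excess_mul_le : (σ ^ (-(1 - θ)) - 1) * ((1 - σ) ^ (-θ) - 1) ≤ 1 / 4 :=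
    calc (σ ^ (-(1 - θ)) - 1) * ((1 - σ) ^ (-θ) - 1)
        ≤ ((1 - θ) * ((1 - σ) / σ)) * (θ * ((1 - (1 - σ)) / (1 - σ))) := by
          gcongr
          · exact mul_nonneg hθ'.1 (div_pos hσ' hσ.1).le
          · exact rpow_neg_sub_one_le hθ' hσ.1
          · exact rpow_neg_sub_one_le hθ hσ'
      _ = θ * (1 - θ) := by
          have := hσ.1
          field_simp
          ring
      _ ≤ 1 / 4 := by nlinarith [sq_nonneg (2 * θ - 1)]
  linarith

/-- A primitive of `σ ^ (-(1 - θ)) + (1 - σ) ^ (-θ) - 3 / 4`, which dominates the integrand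
`1 / geomMean θ σ (1 - σ)` of the settling time by `rpow_neg_mul_rpow_neg_le`. -/
noncomputable def settlingPotential (θ σ : ℝ) : ℝ :=
  σ ^ θ / θ - (1 - σ) ^ (1 - θ) / (1 - θ) - 3 / 4 * σ

lemma hasDerivAt_settlingPotential (hθ : θ ∈ Set.Ioo (0 : ℝ) 1) (hσ : σ ∈ Set.Ioo (0 : ℝ) 1) :
    HasDerivAt (settlingPotential θ) (σ ^ (-(1 - θ)) + (1 - σ) ^ (-θ) - 3 / 4) σ := by
  have hθ' : 1 - θ ≠ 0 := (sub_pos.2 hθ.2).ne'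
  have hleft := ((hasDerivAt_id σ).rpow_const (p := θ) (.inl hσ.1.ne')).div_const θ
  have hright := (((hasDerivAt_id σ).const_sub 1).rpow_const (p := 1 - θ)
    (.inl (sub_pos.2 hσ.2).ne')).div_const (1 - θ)
  refine ((hleft.sub hright).sub ((hasDerivAt_id σ).const_mul (3 / 4))).congr_deriv ?_
  have := hθ.1.ne'
  simp only [id, neg_sub, sub_sub_cancel_left]
  field_simp
  ring

lemma settlingPotential_sub_lt {τ : ℝ} (hθ : θ ∈ Set.Ioo (0 : ℝ) 1)
    (hσ : σ ∈ Set.Ioo (0 : ℝ) 1) (hτ : τ ∈ Set.Ioo (0 : ℝ) 1) :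
    settlingPotential θ σ - settlingPotential θ τ < 1 / θ + 1 / (1 - θ) - 3 / 4 := by
  obtain ⟨hθ0, hθ1⟩ := hθ
  have hθ' : 0 < 1 - θ := sub_pos.2 hθ1
  have upper : settlingPotential θ σ ≤ 1 / θ - 3 / 4 := by
    have h₁ : σ ^ θ / θ ≤ 1 / θ := by
      gcongr
      exact Real.rpow_le_one hσ.1.le hσ.2.le hθ0.le
    have h₂ : 1 - σ ≤ (1 - σ) ^ (1 - θ) / (1 - θ) :=
      (Real.self_le_rpow_of_le_one (by linarith [hσ.2]) (by linarith [hσ.1]) (by linarith)).trans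
        (le_div_self (Real.rpow_nonneg (by linarith [hσ.2]) _) hθ' (by linarith))
    have := hσ.2
    unfold settlingPotential
    linarith
  have lower : -(1 / (1 - θ)) < settlingPotential θ τ := by
    have h₁ : (1 - τ) ^ (1 - θ) / (1 - θ) ≤ 1 / (1 - θ) := by
      gcongr
      exact Real.rpow_le_one (by linarith [hτ.2]) (by linarith [hτ.1]) hθ'.le
    have h₂ : τ ≤ τ ^ θ / θ :=
      (Real.self_le_rpow_of_le_one hτ.1.le hτ.2.le hθ1.le).trans
        (le_div_self (Real.rpow_nonneg hτ.1.le _) hθ0 hθ1.le)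
    have := hτ.1
    unfold settlingPotential
    linarith
  linarith

lemma mul_lt_of_hasDerivAt_le_neg_geomMean {k t : ℝ} {σ σ' : ℝ → ℝ}
    (hθ : θ ∈ Set.Ioo (0 : ℝ) 1) (hk : 0 ≤ k) (ht : 0 ≤ t)
    (hσ : ∀ s ∈ Set.Icc 0 t, σ s ∈ Set.Ioo (0 : ℝ) 1)
    (hderiv : ∀ s ∈ Set.Icc 0 t, HasDerivAt σ (σ' s) s)
    (hle : ∀ s ∈ Set.Icc 0 t, σ' s ≤ -(k * geomMean θ (σ s) (1 - σ s))) :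
    k * t < 1 / θ + 1 / (1 - θ) - 3 / 4 := by
  let Φ' (σ : ℝ) : ℝ := σ ^ (-(1 - θ)) + (1 - σ) ^ (-θ) - 3 / 4
  have hcomp (s) (hs : s ∈ Set.Icc 0 t) :
      HasDerivAt (settlingPotential θ ∘ σ) (Φ' (σ s) * σ' s) s :=
    (hasDerivAt_settlingPotential hθ (hσ s hs)).comp s (hderiv s hs)
  have hdecay (s) (hs : s ∈ Set.Icc 0 t) : Φ' (σ s) * σ' s ≤ -k := by
    have hG : 0 < geomMean θ (σ s) (1 - σ s) := geomMean_pos (hσ s hs).1 (sub_pos.2 (hσ s hs).2)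
    have hΦ' : (geomMean θ (σ s) (1 - σ s))⁻¹ ≤ Φ' (σ s) := by
      rw [geomMean, mul_inv, ← Real.rpow_neg (hσ s hs).1.le,
        ← Real.rpow_neg (sub_pos.2 (hσ s hs).2).le]
      exact rpow_neg_mul_rpow_neg_le (Set.Ioo_subset_Icc_self hθ) (hσ s hs)
    calc Φ' (σ s) * σ' s ≤ Φ' (σ s) * -(k * geomMean θ (σ s) (1 - σ s)) :=
          mul_le_mul_of_nonneg_left (hle s hs) ((inv_pos.2 hG).le.trans hΦ')
      _ ≤ (geomMean θ (σ s) (1 - σ s))⁻¹ * -(k * geomMean θ (σ s) (1 - σ s)) :=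
          mul_le_mul_of_nonpos_right hΦ' (by simp only [neg_nonpos]; positivity)
      _ = -k := by field_simp
  have hdrop := (convex_Icc 0 t).image_sub_le_mul_sub_of_deriv_le (C := -k)
    (fun s hs => (hcomp s hs).continuousAt.continuousWithinAt)
    (fun s hs => (hcomp s (interior_subset hs)).differentiableAt.differentiableWithinAt)
    (fun s hs => (hcomp s (interior_subset hs)).deriv ▸ hdecay s (interior_subset hs))
    0 (Set.left_mem_Icc.2 ht) t (Set.right_mem_Icc.2 ht) ht
  have hrange := settlingPotential_sub_lt hθ (hσ 0 (Set.left_mem_Icc.2 ht))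
    (hσ t (Set.right_mem_Icc.2 ht))
  simp only [Function.comp_apply] at hdrop
  linarith

end SettlingTime

/-- The share of the total decay rate `b₁ * v ^ γ₁ + b₂ * v ^ γ₂` at the value `v` that is due to
the second term. -/
noncomputable def rateShare (b₁ b₂ γ₁ γ₂ v : ℝ) : ℝ :=
  b₂ * v ^ γ₂ / (b₁ * v ^ γ₁ + b₂ * v ^ γ₂)

section RateShare

variable {b₁ b₂ γ₁ γ₂ θ v : ℝ}

lemma one_sub_rateShare (hb₁ : 0 < b₁) (hb₂ : 0 < b₂) (hv : 0 < v) :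
    1 - rateShare b₁ b₂ γ₁ γ₂ v = b₁ * v ^ γ₁ / (b₁ * v ^ γ₁ + b₂ * v ^ γ₂) := by
  unfold rateShare
  field_simp
  ring

lemma rateShare_mem_Ioo (hb₁ : 0 < b₁) (hb₂ : 0 < b₂) (hv : 0 < v) :
    rateShare b₁ b₂ γ₁ γ₂ v ∈ Set.Ioo (0 : ℝ) 1 := by
  constructor
  · unfold rateShare
    positivity
  · rw [← sub_pos, one_sub_rateShare hb₁ hb₂ hv]
    positivity

lemma hasDerivAt_rateShare (hb₁ : 0 < b₁) (hb₂ : 0 < b₂) (hv : 0 < v) :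
    HasDerivAt (rateShare b₁ b₂ γ₁ γ₂)
      ((γ₂ - γ₁) * (b₁ * v ^ γ₁ * (b₂ * v ^ γ₂)) / ((b₁ * v ^ γ₁ + b₂ * v ^ γ₂) ^ 2 * v)) v := by
  have hpow (b γ : ℝ) : HasDerivAt (fun v => b * v ^ γ) (b * (γ * (v ^ γ / v))) v := by
    rw [← Real.rpow_sub_one hv.ne']
    exact (Real.hasDerivAt_rpow_const (.inl hv.ne')).const_mul b
  have hsum : b₁ * v ^ γ₁ + b₂ * v ^ γ₂ ≠ 0 := by positivity
  refine ((hpow b₂ γ₂).fun_div ((hpow b₁ γ₁).fun_add (hpow b₂ γ₂)) hsum).congr_deriv ?_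
  field_simp
  ring

-- Since `1` is the `θ`-mean of `γ₁` and `γ₂`, the two powers of `v` have `θ`-geometric mean `v`.
lemma geomMean_mul_geomMean_rateShare (hmean : (1 - θ) * γ₁ + θ * γ₂ = 1)
    (hb₁ : 0 < b₁) (hb₂ : 0 < b₂) (hv : 0 < v) :
    geomMean θ b₁ b₂ * geomMean θ (rateShare b₁ b₂ γ₁ γ₂ v) (1 - rateShare b₁ b₂ γ₁ γ₂ v) =
      b₁ * v ^ γ₁ * (b₂ * v ^ γ₂) / ((b₁ * v ^ γ₁ + b₂ * v ^ γ₂) * v) := by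
  have hA : 0 < b₁ * v ^ γ₁ := by positivity
  have hB : 0 < b₂ * v ^ γ₂ := by positivity
  set R := b₁ * v ^ γ₁ + b₂ * v ^ γ₂ with hR
  have hR0 : 0 < R := by positivity
  have weights : geomMean θ (b₁ * v ^ γ₁) (b₂ * v ^ γ₂) = geomMean θ b₁ b₂ * v := by
    rw [geomMean_mul hb₁.le hb₂.le (by positivity) (by positivity), geomMean_rpow_rpow hv, hmean,
      Real.rpow_one]
  have shares : geomMean θ (rateShare b₁ b₂ γ₁ γ₂ v) (1 - rateShare b₁ b₂ γ₁ γ₂ v) =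
      geomMean θ (b₂ * v ^ γ₂) (b₁ * v ^ γ₁) / R := by
    rw [one_sub_rateShare hb₁ hb₂ hv, rateShare, ← hR, div_eq_mul_inv, div_eq_mul_inv,
      geomMean_mul hB.le hA.le (inv_pos.2 hR0).le (inv_pos.2 hR0).le,
      geomMean_self (inv_pos.2 hR0), div_eq_mul_inv]
  rw [← geomMean_mul_swap (θ := θ) hA hB, weights, shares]
  field_simp

end RateShare

section TwoPowerDecay

variable {b₁ b₂ γ₁ γ₂ θ t : ℝ} {V V' : ℝ → ℝ}

lemma mul_lt_of_hasDerivAt_le_neg_add_rpow (hθ : θ ∈ Set.Ioo (0 : ℝ) 1)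
    (hmean : (1 - θ) * γ₁ + θ * γ₂ = 1) (hγ : γ₁ ≤ γ₂) (hb₁ : 0 < b₁) (hb₂ : 0 < b₂)
    (ht : 0 ≤ t) (hV : ∀ s ∈ Set.Icc 0 t, 0 < V s)
    (hderiv : ∀ s ∈ Set.Icc 0 t, HasDerivAt V (V' s) s)
    (hle : ∀ s ∈ Set.Icc 0 t, V' s ≤ -(b₁ * V s ^ γ₁ + b₂ * V s ^ γ₂)) :
    (γ₂ - γ₁) * geomMean θ b₁ b₂ * t < 1 / θ + 1 / (1 - θ) - 3 / 4 := by
  have hγ' : 0 ≤ γ₂ - γ₁ := sub_nonneg.2 hγ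
  refine mul_lt_of_hasDerivAt_le_neg_geomMean hθ
    (mul_nonneg hγ' (geomMean_pos hb₁ hb₂).le) ht
    (fun s hs => rateShare_mem_Ioo hb₁ hb₂ (hV s hs))
    (fun s hs => (hasDerivAt_rateShare (γ₁ := γ₁) (γ₂ := γ₂) hb₁ hb₂ (hV s hs)).comp s
      (hderiv s hs)) fun s hs => ?_
  have hVs := hV s hs
  rw [mul_assoc (γ₂ - γ₁) (geomMean θ b₁ b₂), geomMean_mul_geomMean_rateShare hmean hb₁ hb₂ hVs]
  calc _ ≤ (γ₂ - γ₁) * (b₁ * V s ^ γ₁ * (b₂ * V s ^ γ₂)) /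
          ((b₁ * V s ^ γ₁ + b₂ * V s ^ γ₂) ^ 2 * V s) * -(b₁ * V s ^ γ₁ + b₂ * V s ^ γ₂) := by
        gcongr
        exact hle s hs
    _ = _ := by field_simp

lemma lt_settlingTime_of_geomMean_le {a₁ a₂ : ℝ} (hθ : θ ∈ Set.Ioo (0 : ℝ) 1)
    (hmean : (1 - θ) * γ₁ + θ * γ₂ = 1) (hγ : γ₁ < γ₂)
    (ha₁ : 0 < a₁) (ha₂ : 0 < a₂) (hb₁ : 0 < b₁) (hb₂ : 0 < b₂)
    (hab : (1 - 3 / 4 * (θ * (1 - θ))) * geomMean θ a₁ a₂ ≤ geomMean θ b₁ b₂)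
    (ht : 0 ≤ t) (hV : ∀ s ∈ Set.Icc 0 t, 0 < V s)
    (hderiv : ∀ s ∈ Set.Icc 0 t, HasDerivAt V (V' s) s)
    (hle : ∀ s ∈ Set.Icc 0 t, V' s ≤ -(b₁ * V s ^ γ₁ + b₂ * V s ^ γ₂)) :
    t < 1 / (a₁ * (1 - γ₁)) + 1 / (a₂ * (γ₂ - 1)) := by
  have hθ0 : 0 < θ := hθ.1
  have hθ1 : 0 < 1 - θ := sub_pos.2 hθ.2
  have hγ' : 0 < γ₂ - γ₁ := sub_pos.2 hγ
  have hGa := geomMean_pos (θ := θ) ha₁ ha₂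
  have hGb := geomMean_pos (θ := θ) hb₁ hb₂
  have time_lt : θ * (1 - θ) * (γ₂ - γ₁) * t < (geomMean θ a₁ a₂)⁻¹ := by
    have h := mul_lt_of_hasDerivAt_le_neg_add_rpow hθ hmean hγ.le hb₁ hb₂ ht hV hderiv hle
    calc θ * (1 - θ) * (γ₂ - γ₁) * t
        = θ * (1 - θ) * ((γ₂ - γ₁) * geomMean θ b₁ b₂ * t) / geomMean θ b₁ b₂ := by
          field_simp
      _ < θ * (1 - θ) * (1 / θ + 1 / (1 - θ) - 3 / 4) / geomMean θ b₁ b₂ := by gcongr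
      _ = (1 - 3 / 4 * (θ * (1 - θ))) / geomMean θ b₁ b₂ := by
          field_simp
          ring
      _ ≤ (geomMean θ a₁ a₂)⁻¹ := by
          rwa [div_le_iff₀ hGb, inv_mul_eq_div, le_div_iff₀ hGa]
  have mean_le : (geomMean θ a₁ a₂)⁻¹ ≤ (1 - θ) * a₁⁻¹ + θ * a₂⁻¹ := by
    rw [← geomMean_inv ha₁.le ha₂.le]
    exact geomMean_le_arithMean (Set.Ioo_subset_Icc_self hθ) (inv_pos.2 ha₁).le (inv_pos.2 ha₂).le
  have settlingTime_eq : (1 - θ) * a₁⁻¹ + θ * a₂⁻¹ =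
      θ * (1 - θ) * (γ₂ - γ₁) * (1 / (a₁ * (1 - γ₁)) + 1 / (a₂ * (γ₂ - 1))) := by
    rw [show 1 - γ₁ = θ * (γ₂ - γ₁) by linear_combination -hmean,
      show γ₂ - 1 = (1 - θ) * (γ₂ - γ₁) by linear_combination hmean]
    field_simp
  rw [settlingTime_eq] at mean_le
  exact lt_of_mul_lt_mul_left (time_lt.trans_le mean_le) (by positivity)

end TwoPowerDecay

/-- A lower bound for how strongly a term of the vector field with exponent `e = 1 - αᵢ` dissipates,
relative to a proximal step of the least possible length `(1 - c) * ‖x - x*‖`. The bound holds for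
all longer steps, by `dissipationFactor_mul_rpow_le`. -/
noncomputable def dissipationFactor (c e : ℝ) : ℝ :=
  if e ≤ 1 - c then 1 else √(1 - c ^ 2)

/-- The rate `sᵢ` of the settling time bound, as a function of `e = 1 - αᵢ`. -/
noncomputable def nominalRate (κ c e : ℝ) : ℝ :=
  κ / (1 - c) ^ e * (((1 - c) / (1 + c)) ^ e - c)

/-- The bound `T` on the settling time, with `γᵢ = (1 + αᵢ) / 2` and `aᵢ = 2 ^ γᵢ * sᵢ`. -/
noncomputable def settlingTime (κ₁ κ₂ α₁ α₂ c : ℝ) : ℝ :=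
  1 / (2 ^ ((1 + α₁) / 2) * nominalRate κ₁ c (1 - α₁) * (1 - (1 + α₁) / 2)) +
    1 / (2 ^ ((1 + α₂) / 2) * nominalRate κ₂ c (1 - α₂) * ((1 + α₂) / 2 - 1))

/-- The decay rate which the term of the vector field with gain `κ` and exponent `e = 1 - αᵢ`
really contributes to the Lyapunov function; see `guaranteedRate_mul_rpow_le`. -/
noncomputable def guaranteedRate (κ c e : ℝ) : ℝ :=
  κ / (1 - c) ^ e * ((1 - c) * dissipationFactor c e)

section Dissipation

variable {c e : ℝ}

lemma dissipationFactor_pos (hc : c ∈ Set.Ioo (0 : ℝ) 1) : 0 < dissipationFactor c e := by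
  unfold dissipationFactor
  split_ifs
  · exact one_pos
  · exact Real.sqrt_pos.2 (by nlinarith [hc.1, hc.2])

lemma guaranteedRate_pos {κ : ℝ} (hκ : 0 < κ) (hc : c ∈ Set.Ioo (0 : ℝ) 1) :
    0 < guaranteedRate κ c e := by
  have := dissipationFactor_pos (e := e) hc
  have := sub_pos.2 hc.2
  unfold guaranteedRate
  positivity

lemma nominalRate_pos {κ : ℝ} (hκ : 0 < κ) (hc : c ∈ Set.Ioo (0 : ℝ) 1)
    (he : c < ((1 - c) / (1 + c)) ^ e) : 0 < nominalRate κ c e :=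
  mul_pos (div_pos hκ (Real.rpow_pos_of_pos (sub_pos.2 hc.2) e)) (sub_pos.2 he)

lemma lt_rpow_of_nonpos (hc : c ∈ Set.Ioo (0 : ℝ) 1) (he : e ≤ 0) :
    c < ((1 - c) / (1 + c)) ^ e := by
  obtain ⟨hc0, hc1⟩ := hc
  have := sub_pos.2 hc1
  exact hc1.trans_le <| Real.one_le_rpow_of_pos_of_le_one_of_nonpos (by positivity)
    ((div_le_one (by positivity)).2 (by linarith)) he

lemma settlingTime_pos {κ₁ κ₂ α₁ α₂ : ℝ} (hκ₁ : 0 < κ₁) (hκ₂ : 0 < κ₂)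
    (hc : c ∈ Set.Ioo (0 : ℝ) 1) (hα₁ : α₁ < 1)
    (hcα₁ : c < ((1 - c) / (1 + c)) ^ (1 - α₁)) (hα₂ : 1 < α₂) :
    0 < settlingTime κ₁ κ₂ α₁ α₂ c := by
  have ha₁ := nominalRate_pos hκ₁ hc hcα₁
  have ha₂ := nominalRate_pos hκ₂ hc (lt_rpow_of_nonpos hc (sub_neg.2 hα₂).le)
  have hγ₁ : 0 < 1 - (1 + α₁) / 2 := by linarith
  have hγ₂ : 0 < (1 + α₂) / 2 - 1 := by linarith
  unfold settlingTime
  positivity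

lemma lt_rpow_of_lt_log_div_log (hc : c ∈ Set.Ioo (0 : ℝ) 1)
    (he : e < Real.log c / Real.log ((1 - c) / (1 + c))) : c < ((1 - c) / (1 + c)) ^ e := by
  obtain ⟨hc0, hc1⟩ := hc
  have := sub_pos.2 hc1
  have hr : 0 < (1 - c) / (1 + c) := by positivity
  have hlog : Real.log ((1 - c) / (1 + c)) < 0 :=
    Real.log_neg hr ((div_lt_one (by positivity)).2 (by linarith))
  exact (Real.lt_rpow_iff_log_lt hc0 hr).2 ((lt_div_iff_of_neg hlog).1 he)

lemma dissipationFactor_mul_rpow_le {m : ℝ} (hc : c ∈ Set.Ioo (0 : ℝ) 1) (he : e ≤ 1)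
    (hm : 1 ≤ m) : dissipationFactor c e * m ^ e ≤ ((1 + c) + (1 - c) * m ^ 2) / 2 := by
  obtain ⟨hc0, hc1⟩ := hc
  have hm0 : 0 ≤ m := zero_le_one.trans hm
  unfold dissipationFactor
  split_ifs with hce
  · calc 1 * m ^ e ≤ m ^ (1 - c) := by
          rw [one_mul]
          exact Real.rpow_le_rpow_of_exponent_le hm hce
      _ = geomMean ((1 - c) / 2) 1 (m ^ 2) := by
          rw [geomMean, Real.one_rpow, one_mul, ← Real.rpow_natCast_mul hm0]
          congr 1
          push_cast
          ring
      _ ≤ (1 - (1 - c) / 2) * 1 + (1 - c) / 2 * m ^ 2 :=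
          geomMean_le_arithMean ⟨by linarith, by linarith⟩ zero_le_one (sq_nonneg m)
      _ = ((1 + c) + (1 - c) * m ^ 2) / 2 := by ring
  · calc √(1 - c ^ 2) * m ^ e ≤ √(1 - c ^ 2) * m := by
          gcongr
          exact Real.rpow_le_self_of_one_le hm he
      _ = √((1 + c) * ((1 - c) * m ^ 2)) := by
          rw [← Real.sqrt_sq hm0, ← Real.sqrt_mul (by nlinarith), Real.sq_sqrt (sq_nonneg m)]
          ring_nf
      _ ≤ ((1 + c) + (1 - c) * m ^ 2) / 2 := by
          refine Real.sqrt_le_iff.2 ⟨by nlinarith [sq_nonneg m], ?_⟩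
          linarith [sq_nonneg ((1 + c) - (1 - c) * m ^ 2)]

lemma one_sub_mul_norm_le {E : Type*} [SeminormedAddCommGroup E] {u d : E}
    (hud : ‖u - d‖ ≤ c * ‖u‖) : (1 - c) * ‖u‖ ≤ ‖d‖ := by
  linarith [norm_le_norm_add_norm_sub' u d]

variable {E : Type*} [NormedAddCommGroup E] [InnerProductSpace ℝ E] {u d : E}

open scoped RealInnerProductSpace

lemma one_sub_sq_mul_norm_sq_add_norm_sq_le (hud : ‖u - d‖ ≤ c * ‖u‖) :
    (1 - c ^ 2) * ‖u‖ ^ 2 + ‖d‖ ^ 2 ≤ 2 * ⟪u, d⟫ := by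
  have hsq := pow_le_pow_left₀ (norm_nonneg _) hud 2
  rw [norm_sub_sq_real, mul_pow] at hsq
  linarith

lemma guaranteedRate_mul_rpow_le {κ : ℝ} (hκ : 0 ≤ κ) (hc : c ∈ Set.Ioo (0 : ℝ) 1) (he : e ≤ 1)
    (hu : u ≠ 0) (hud : ‖u - d‖ ≤ c * ‖u‖) :
    guaranteedRate κ c e * ‖u‖ ^ (2 - e) ≤ κ / ‖d‖ ^ e * ⟪u, d⟫ := by
  have hu0 : 0 < ‖u‖ := norm_pos_iff.2 hu
  have hc' : 0 < 1 - c := sub_pos.2 hc.2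
  obtain ⟨m, hm, hd⟩ : ∃ m, 1 ≤ m ∧ ‖d‖ = m * ((1 - c) * ‖u‖) :=
    ⟨‖d‖ / ((1 - c) * ‖u‖), (one_le_div (by positivity)).2 (one_sub_mul_norm_le hud),
      (div_mul_cancel₀ _ (by positivity)).symm⟩
  have hm0 : 0 < m := one_pos.trans_le hm
  have hinner : (1 - c) * ‖u‖ ^ 2 * (dissipationFactor c e * m ^ e) ≤ ⟪u, d⟫ :=
    calc (1 - c) * ‖u‖ ^ 2 * (dissipationFactor c e * m ^ e)
        ≤ (1 - c) * ‖u‖ ^ 2 * (((1 + c) + (1 - c) * m ^ 2) / 2) := by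
          gcongr
          exact dissipationFactor_mul_rpow_le hc he hm
      _ = ((1 - c ^ 2) * ‖u‖ ^ 2 + ‖d‖ ^ 2) / 2 := by
          rw [hd]
          ring
      _ ≤ ⟪u, d⟫ := by linarith [one_sub_sq_mul_norm_sq_add_norm_sq_le hud]
  calc guaranteedRate κ c e * ‖u‖ ^ (2 - e)
      = κ / ‖d‖ ^ e * ((1 - c) * ‖u‖ ^ 2 * (dissipationFactor c e * m ^ e)) := by
        rw [guaranteedRate, hd, Real.mul_rpow hm0.le (by positivity),
          Real.mul_rpow hc'.le hu0.le, Real.rpow_sub hu0, Real.rpow_two]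
        field_simp
    _ ≤ κ / ‖d‖ ^ e * ⟪u, d⟫ := by gcongr

end Dissipation

section RateComparison

variable {c θ : ℝ}

lemma geomMean_sub_le_one_sub {a b : ℝ} (hθ : θ ∈ Set.Icc (0 : ℝ) 1) (hc : 0 < c) (ha : c < a)
    (hb : c < b) (hab : geomMean θ a b = 1) : geomMean θ (a - c) (b - c) ≤ 1 - c := by
  have h := geomMean_add_geomMean_le hθ (sub_pos.2 ha) (sub_pos.2 hb) hc hc
  rw [geomMean_self hc, sub_add_cancel, sub_add_cancel, hab] at h
  linarith

lemma geomMean_sub_le_rpow {a b : ℝ} (hθ : θ ∈ Set.Icc (0 : ℝ) 1) (hc : 0 < c) (ha : c < a)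
    (hb : c < b) (hab : geomMean θ a b = 1) :
    geomMean θ (a - c) (b - c) ≤ (1 - c / a) ^ (1 - θ) := by
  have ha0 : 0 < a := hc.trans ha
  have hca : 0 ≤ 1 - c / a := sub_nonneg.2 ((div_le_one ha0).2 ha.le)
  calc geomMean θ (a - c) (b - c) ≤ geomMean θ (a - c) b :=
        geomMean_le_geomMean hθ (sub_nonneg.2 ha.le) (sub_nonneg.2 hb.le) le_rfl (by linarith)
    _ = geomMean θ ((1 - c / a) * a) (1 * b) := by
        rw [one_sub_mul, div_mul_cancel₀ _ ha0.ne', one_mul]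
    _ = geomMean θ (1 - c / a) 1 * geomMean θ a b :=
        geomMean_mul hca zero_le_one ha0.le (hc.trans hb).le
    _ = (1 - c / a) ^ (1 - θ) := by
        rw [hab, geomMean, Real.one_rpow, mul_one, mul_one]

lemma one_sub_div_rpow_le {e : ℝ} (hc : c ∈ Set.Ioo (0 : ℝ) 1) (he : 1 - c ≤ e) :
    1 - c / ((1 - c) / (1 + c)) ^ e ≤ (1 - c) * (1 - 2 * c ^ 2) := by
  obtain ⟨hc0, hc1⟩ := hc
  have := sub_pos.2 hc1
  have hlog : 2 * c ≤ Real.log ((1 + c) / (1 - c)) :=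
    calc 2 * c = 2 * (2 * c / (1 - c)) / (2 * c / (1 - c) + 2) := by
          field_simp
          ring
      _ ≤ Real.log (1 + 2 * c / (1 - c)) := Real.le_log_one_add_of_nonneg (by positivity)
      _ = Real.log ((1 + c) / (1 - c)) := by
          congr 1
          field_simp
          ring
  have hpow : 1 + 2 * c * (1 - c) ≤ (((1 - c) / (1 + c)) ^ e)⁻¹ :=
    calc 1 + 2 * c * (1 - c) ≤ Real.log ((1 + c) / (1 - c)) * e + 1 := by nlinarith
      _ ≤ Real.exp (Real.log ((1 + c) / (1 - c)) * e) := Real.add_one_le_exp _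
      _ = (((1 - c) / (1 + c)) ^ e)⁻¹ := by
          rw [← Real.rpow_def_of_pos (by positivity), ← Real.inv_rpow (by positivity), inv_div]
  have := mul_le_mul_of_nonneg_left hpow hc0.le
  rw [div_eq_mul_inv]
  linarith

lemma one_sub_mul_le_sqrt_half_rpow {x : ℝ} (hx : 0 ≤ x) : 1 - 3 / 8 * x ≤ √(1 / 2) ^ x := by
  have hlog : Real.log √(1 / 2) = -(Real.log 2 / 2) := by
    rw [Real.log_sqrt (by norm_num), one_div, Real.log_inv]
    ring
  calc 1 - 3 / 8 * x ≤ Real.log √(1 / 2) * x + 1 := by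
        rw [hlog]
        nlinarith [Real.log_two_lt_d9]
    _ ≤ Real.exp (Real.log √(1 / 2) * x) := Real.add_one_le_exp _
    _ = √(1 / 2) ^ x := (Real.rpow_def_of_pos (by positivity) x).symm

lemma sqrt_half_mul_le (hc : c ∈ Set.Ioo (0 : ℝ) 1) (hc2 : 2 * c ^ 2 ≤ 1) :
    √(1 / 2) * (1 - 2 * c ^ 2) ≤ √(1 - c ^ 2) * (1 - c) := by
  obtain ⟨hc0, hc1⟩ := hc
  have quartic_nonneg : 0 ≤ 1 - 4 * c + 4 * c ^ 2 + 4 * c ^ 3 - 6 * c ^ 4 := by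
    rcases le_total (3 * c) 2 with h | h
    · calc 0 ≤ (1 - 2 * c) ^ 2 + 2 * c ^ 3 * (2 - 3 * c) :=
            add_nonneg (sq_nonneg _) (mul_nonneg (by positivity) (sub_nonneg.2 h))
        _ = _ := by ring
    · calc 0 ≤ (1 - c) ^ 2 + c * (3 * c - 2) * (1 - 2 * c ^ 2) :=
            add_nonneg (sq_nonneg _)
              (mul_nonneg (mul_nonneg hc0.le (sub_nonneg.2 h)) (sub_nonneg.2 hc2))
        _ = _ := by ring
  refine le_of_sq_le_sq ?_ (mul_nonneg (Real.sqrt_nonneg _) (sub_pos.2 hc1).le)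
  rw [mul_pow, mul_pow, Real.sq_sqrt (by norm_num), Real.sq_sqrt (by nlinarith)]
  linarith

lemma slack_mul_le_of_le {G k x μ : ℝ} (hθ : θ ∈ Set.Icc (0 : ℝ) 1) (hG : 0 ≤ G) (hk : 0 < k)
    (hx : 0 < x) (hμ : √(1 / 2) ≤ μ) (hxμ : x ≤ μ) (hxk : √(1 / 2) * x ≤ μ * k)
    (hGk : G ≤ k) (hGx : G ≤ (k * x) ^ (1 - θ)) :
    (1 - 3 / 4 * (θ * (1 - θ))) * G ≤ k * μ ^ (1 - θ) := by
  obtain ⟨hθ0, hθ1⟩ := hθ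
  have hθ' : 0 ≤ 1 - θ := sub_nonneg.2 hθ1
  have hμ0 : 0 < μ := hx.trans_le hxμ
  rcases le_total (1 / 2) θ with half_le | le_half
  · calc (1 - 3 / 4 * (θ * (1 - θ))) * G ≤ (1 - 3 / 8 * (1 - θ)) * G := by
          gcongr ?_ * G
          nlinarith
      _ ≤ √(1 / 2) ^ (1 - θ) * G := by
          gcongr
          exact one_sub_mul_le_sqrt_half_rpow hθ'
      _ ≤ μ ^ (1 - θ) * k := by gcongr
      _ = k * μ ^ (1 - θ) := mul_comm _ _
  · calc (1 - 3 / 4 * (θ * (1 - θ))) * G ≤ (1 - 3 / 8 * θ) * G := by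
          gcongr ?_ * G
          nlinarith
      _ ≤ √(1 / 2) ^ θ * (k * x) ^ (1 - θ) := by
          gcongr
          exact one_sub_mul_le_sqrt_half_rpow hθ0
      _ = √(1 / 2) ^ θ * (x / μ) ^ (1 - θ) * (k ^ (1 - θ) * μ ^ (1 - θ)) := by
          rw [Real.div_rpow hx.le hμ0.le, Real.mul_rpow hk.le hx.le]
          field_simp
      _ ≤ √(1 / 2) ^ θ * (x / μ) ^ θ * (k ^ (1 - θ) * μ ^ (1 - θ)) := by
          gcongr √(1 / 2) ^ θ * ?_ * (k ^ (1 - θ) * μ ^ (1 - θ))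
          exact Real.rpow_le_rpow_of_exponent_ge (by positivity) ((div_le_one hμ0).2 hxμ)
            (by linarith)
      _ ≤ k ^ θ * (k ^ (1 - θ) * μ ^ (1 - θ)) := by
          rw [← Real.mul_rpow (by positivity) (by positivity)]
          gcongr
          rwa [← mul_div_assoc, div_le_iff₀' hμ0]
      _ = k * μ ^ (1 - θ) := by
          rw [← mul_assoc, ← Real.rpow_add hk, add_sub_cancel, Real.rpow_one]

lemma slack_mul_geomMean_sub_le {e₁ e₂ : ℝ} (hc : c ∈ Set.Ioo (0 : ℝ) 1)
    (hθ : θ ∈ Set.Ioo (0 : ℝ) 1) (he : (1 - θ) * e₁ + θ * e₂ = 0) (he₂ : e₂ ≤ 0)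
    (hce₁ : c < ((1 - c) / (1 + c)) ^ e₁) :
    (1 - 3 / 4 * (θ * (1 - θ))) *
        geomMean θ (((1 - c) / (1 + c)) ^ e₁ - c) (((1 - c) / (1 + c)) ^ e₂ - c) ≤
      (1 - c) * dissipationFactor c e₁ ^ (1 - θ) := by
  have ⟨hc0, hc1⟩ := hc
  have ⟨hθ0, hθ1⟩ := hθ
  have hc' : 0 < 1 - c := sub_pos.2 hc1
  have hθ' : 0 < 1 - θ := sub_pos.2 hθ1
  have hθI := Set.Ioo_subset_Icc_self hθ
  set r := (1 - c) / (1 + c)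
  have hr0 : 0 < r := by positivity
  have hce₂ : c < r ^ e₂ := lt_rpow_of_nonpos hc he₂
  have hmean : geomMean θ (r ^ e₁) (r ^ e₂) = 1 := by
    rw [geomMean_rpow_rpow hr0, he, Real.rpow_zero]
  set G := geomMean θ (r ^ e₁ - c) (r ^ e₂ - c)
  have hG0 : 0 < G := geomMean_pos (sub_pos.2 hce₁) (sub_pos.2 hce₂)
  have hG₁ : G ≤ 1 - c := geomMean_sub_le_one_sub hθI hc0 hce₁ hce₂ hmean
  unfold dissipationFactor
  split_ifs with hle
  · rw [Real.one_rpow, mul_one]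
    have := mul_pos (mul_pos hθ0 hθ') hG0
    linarith
  set x := 1 - 2 * c ^ 2
  have hdiv : 1 - c / r ^ e₁ ≤ (1 - c) * x := one_sub_div_rpow_le hc (not_le.1 hle).le
  have hx0 : 0 < x := pos_of_mul_pos_right
    ((sub_pos.2 ((div_lt_one (hc0.trans hce₁)).2 hce₁)).trans_le hdiv) hc'.le
  have hc2 : 2 * c ^ 2 ≤ 1 := (sub_pos.1 hx0).le
  refine slack_mul_le_of_le hθI hG0.le hc' hx0 (Real.sqrt_le_sqrt (by linarith))
    (Real.le_sqrt_of_sq_le (by nlinarith)) (sqrt_half_mul_le hc hc2) hG₁ ?_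
  calc G ≤ (1 - c / r ^ e₁) ^ (1 - θ) := geomMean_sub_le_rpow hθI hc0 hce₁ hce₂ hmean
    _ ≤ ((1 - c) * x) ^ (1 - θ) :=
      Real.rpow_le_rpow (sub_pos.2 ((div_lt_one (hc0.trans hce₁)).2 hce₁)).le hdiv hθ'.le

lemma slack_mul_geomMean_nominalRate_le {κ₁ κ₂ e₁ e₂ : ℝ} (hκ₁ : 0 < κ₁) (hκ₂ : 0 < κ₂)
    (hc : c ∈ Set.Ioo (0 : ℝ) 1) (hθ : θ ∈ Set.Ioo (0 : ℝ) 1)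
    (he : (1 - θ) * e₁ + θ * e₂ = 0) (he₂ : e₂ ≤ 0)
    (hce₁ : c < ((1 - c) / (1 + c)) ^ e₁) :
    (1 - 3 / 4 * (θ * (1 - θ))) * geomMean θ (nominalRate κ₁ c e₁) (nominalRate κ₂ c e₂) ≤
      geomMean θ (guaranteedRate κ₁ c e₁) (guaranteedRate κ₂ c e₂) := by
  have hc' : 0 < 1 - c := sub_pos.2 hc.2
  have hce₂ : c < ((1 - c) / (1 + c)) ^ e₂ := lt_rpow_of_nonpos hc he₂
  have hμ (e : ℝ) : 0 < dissipationFactor c e := dissipationFactor_pos hc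
  have hμ₂ : dissipationFactor c e₂ = 1 := if_pos (by linarith)
  have hguaranteed : geomMean θ ((1 - c) * dissipationFactor c e₁)
      ((1 - c) * dissipationFactor c e₂) = (1 - c) * dissipationFactor c e₁ ^ (1 - θ) := by
    rw [geomMean_mul hc'.le hc'.le (hμ _).le (hμ _).le, geomMean_self hc', hμ₂, geomMean,
      Real.one_rpow, mul_one]
  have hκ₁' : 0 < κ₁ / (1 - c) ^ e₁ := by positivity
  have hκ₂' : 0 < κ₂ / (1 - c) ^ e₂ := by positivity
  unfold nominalRate guaranteedRate
  rw [geomMean_mul hκ₁'.le hκ₂'.le (sub_pos.2 hce₁).le (sub_pos.2 hce₂).le,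
    geomMean_mul hκ₁'.le hκ₂'.le (mul_pos hc' (hμ _)).le (mul_pos hc' (hμ _)).le, hguaranteed,
    mul_left_comm]
  exact mul_le_mul_of_nonneg_left (slack_mul_geomMean_sub_le hc hθ he he₂ hce₁)
    (geomMean_pos hκ₁' hκ₂').le

end RateComparison

section Curve

lemma two_rpow_mul_half_sq_rpow {r : ℝ} (hr : 0 ≤ r) (p : ℝ) :
    2 ^ (p / 2) * (r ^ 2 / 2) ^ (p / 2) = r ^ p := by
  rw [← Real.mul_rpow zero_le_two (by positivity), mul_div_cancel₀ _ two_ne_zero,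
    ← Real.rpow_natCast_mul hr]
  congr 1
  push_cast
  ring

open scoped RealInnerProductSpace

variable {E : Type*} [NormedAddCommGroup E] [InnerProductSpace ℝ E]

lemma inner_neg_smul_sub_smul_le {c κ₁ κ₂ α₁ α₂ : ℝ} {u d : E} (hc : c ∈ Set.Ioo (0 : ℝ) 1)
    (hκ₁ : 0 ≤ κ₁) (hκ₂ : 0 ≤ κ₂) (hα₁ : 0 ≤ α₁) (hα₂ : 0 ≤ α₂) (hu : u ≠ 0)
    (hud : ‖u - d‖ ≤ c * ‖u‖) :
    ⟪u, -((κ₁ / ‖d‖ ^ (1 - α₁)) • d) - (κ₂ / ‖d‖ ^ (1 - α₂)) • d⟫ ≤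
      -(guaranteedRate κ₁ c (1 - α₁) * ‖u‖ ^ (1 + α₁) +
        guaranteedRate κ₂ c (1 - α₂) * ‖u‖ ^ (1 + α₂)) := by
  have hexp (α : ℝ) : 1 + α = 2 - (1 - α) := by ring
  rw [inner_sub_right, inner_neg_right, real_inner_smul_right, real_inner_smul_right, hexp α₁,
    hexp α₂]
  have h₁ := guaranteedRate_mul_rpow_le hκ₁ hc (sub_le_self 1 hα₁) hu hud
  have h₂ := guaranteedRate_mul_rpow_le hκ₂ hc (sub_le_self 1 hα₂) hu hud
  linarith

variable {x x' : ℝ → E} {y : E} {t : ℝ}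

lemma hasDerivAt_half_norm_sub_sq {v : E} (hx : HasDerivAt x v t) :
    HasDerivAt (fun s => ‖x s - y‖ ^ 2 / 2) ⟪x t - y, v⟫ t := by
  simpa only [mul_div_cancel_left₀ _ (two_ne_zero' ℝ)] using (hx.sub_const y).norm_sq.div_const 2

lemma ne_of_inner_deriv_nonpos (hx : ∀ s ∈ Set.Icc 0 t, HasDerivAt x (x' s) s)
    (hle : ∀ s ∈ Set.Icc 0 t, ⟪x s - y, x' s⟫ ≤ 0) (hne : x t ≠ y) :
    ∀ s ∈ Set.Icc 0 t, x s ≠ y := by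
  have hV (s) (hs : s ∈ Set.Icc 0 t) := hasDerivAt_half_norm_sub_sq (y := y) (hx s hs)
  have hanti : AntitoneOn (fun s => ‖x s - y‖ ^ 2 / 2) (Set.Icc 0 t) :=
    antitoneOn_of_deriv_nonpos (convex_Icc 0 t)
      (fun s hs => (hV s hs).continuousAt.continuousWithinAt)
      (fun s hs => (hV s (interior_subset hs)).differentiableAt.differentiableWithinAt)
      (fun s hs => (hV s (interior_subset hs)).deriv ▸ hle s (interior_subset hs))
  rintro s hs rfl
  have h := hanti hs (Set.right_mem_Icc.2 (hs.1.trans hs.2)) hs.2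
  have : 0 < ‖x t - x s‖ := norm_pos_iff.2 (sub_ne_zero.2 hne)
  simp only [sub_self, norm_zero] at h
  nlinarith

variable {z h : E → E} {xs : E} {c κ₁ κ₂ α₁ α₂ : ℝ}

lemma lt_settlingTime_of_ne (hc : c ∈ Set.Ioo (0 : ℝ) 1) (hκ₁ : 0 < κ₁) (hκ₂ : 0 < κ₂)
    (hα₁ : α₁ < 1) (hcα₁ : c < ((1 - c) / (1 + c)) ^ (1 - α₁)) (hα₂ : 1 < α₂) (ht : 0 ≤ t)
    (hne : ∀ s ∈ Set.Icc 0 t, x s ≠ y) (hx : ∀ s ∈ Set.Icc 0 t, HasDerivAt x (x' s) s)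
    (hle : ∀ s ∈ Set.Icc 0 t, ⟪x s - y, x' s⟫ ≤
      -(guaranteedRate κ₁ c (1 - α₁) * ‖x s - y‖ ^ (1 + α₁) +
        guaranteedRate κ₂ c (1 - α₂) * ‖x s - y‖ ^ (1 + α₂))) :
    t < settlingTime κ₁ κ₂ α₁ α₂ c := by
  obtain ⟨θ, hθ, hmean⟩ : ∃ θ ∈ Set.Ioo (0 : ℝ) 1, (1 - θ) * α₁ + θ * α₂ = 1 := by
    have hα : 0 < α₂ - α₁ := by linarith
    refine ⟨(1 - α₁) / (α₂ - α₁), ⟨div_pos (by linarith) hα, (div_lt_one hα).2 (by linarith)⟩, ?_⟩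
    field_simp
    ring
  have ha₁ := nominalRate_pos hκ₁ hc hcα₁
  have ha₂ := nominalRate_pos hκ₂ hc (lt_rpow_of_nonpos hc (sub_neg.2 hα₂).le)
  have hb₁ := guaranteedRate_pos (e := 1 - α₁) hκ₁ hc
  have hb₂ := guaranteedRate_pos (e := 1 - α₂) hκ₂ hc
  have hp (γ : ℝ) : 0 < (2 : ℝ) ^ γ := Real.rpow_pos_of_pos two_pos γ
  have hrates := slack_mul_geomMean_nominalRate_le (mul_pos (hp ((1 + α₁) / 2)) hκ₁)
    (mul_pos (hp ((1 + α₂) / 2)) hκ₂) hc hθ (by linarith : (1 - θ) * (1 - α₁) + θ * (1 - α₂) = 0)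
    (sub_neg.2 hα₂).le hcα₁
  refine lt_settlingTime_of_geomMean_le hθ (by linarith) (by linarith)
    (mul_pos (hp _) ha₁) (mul_pos (hp _) ha₂) (mul_pos (hp _) hb₁) (mul_pos (hp _) hb₂)
    (by simpa only [nominalRate, guaranteedRate, mul_div_assoc, mul_assoc] using hrates) ht
    (fun s hs => ?_) (fun s hs => hasDerivAt_half_norm_sub_sq (y := y) (hx s hs))
    fun s hs => (hle s hs).trans_eq ?_
  · have : 0 < ‖x s - y‖ := norm_pos_iff.2 (sub_ne_zero.2 (hne s hs))
    positivity
  · rw [← two_rpow_mul_half_sq_rpow (norm_nonneg _), ← two_rpow_mul_half_sq_rpow (norm_nonneg _)]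
    ring

theorem stmt_15_general (hc : c ∈ Set.Ioo (0 : ℝ) 1)
    (hcontr : ∀ v, ‖z v - xs‖ ≤ c * ‖v - xs‖) (hκ₁ : 0 < κ₁) (hκ₂ : 0 < κ₂)
    (hα₁ : α₁ ∈ Set.Ico (0 : ℝ) 1) (hcα₁ : c < ((1 - c) / (1 + c)) ^ (1 - α₁)) (hα₂ : 1 < α₂)
    (hh : ∀ v, v ≠ xs → h v = -((κ₁ / ‖v - z v‖ ^ (1 - α₁)) • (v - z v))
      - (κ₂ / ‖v - z v‖ ^ (1 - α₂)) • (v - z v))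
    (hx : ∀ t, 0 ≤ t → HasDerivAt x (h (x t)) t) (ht : settlingTime κ₁ κ₂ α₁ α₂ c ≤ t) :
    x t = xs := by
  have hdecay (v) (hv : v ≠ xs) : ⟪v - xs, h v⟫ ≤
      -(guaranteedRate κ₁ c (1 - α₁) * ‖v - xs‖ ^ (1 + α₁) +
        guaranteedRate κ₂ c (1 - α₂) * ‖v - xs‖ ^ (1 + α₂)) := by
    rw [hh v hv]
    exact inner_neg_smul_sub_smul_le hc hκ₁.le hκ₂.le hα₁.1 (zero_le_one.trans hα₂.le)
      (sub_ne_zero.2 hv) (by simpa only [sub_sub_sub_cancel_left] using hcontr v)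
  have hb₁ := guaranteedRate_pos (e := 1 - α₁) hκ₁ hc
  have hb₂ := guaranteedRate_pos (e := 1 - α₂) hκ₂ hc
  have hnonpos (v) : ⟪v - xs, h v⟫ ≤ 0 := by
    rcases eq_or_ne v xs with rfl | hv
    · rw [sub_self, inner_zero_left]
    · exact (hdecay v hv).trans (neg_nonpos.2 (by positivity))
  have ht0 : 0 ≤ t := (settlingTime_pos hκ₁ hκ₂ hc hα₁.2 hcα₁ hα₂).le.trans ht
  by_contra hne
  have hne' := ne_of_inner_deriv_nonpos (t := t) (fun s hs => hx s hs.1)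
    (fun s _ => hnonpos (x s)) hne
  exact ht.not_gt <| lt_settlingTime_of_ne hc hκ₁ hκ₂ hα₁.2 hcα₁ hα₂ ht0 hne'
    (fun s hs => hx s hs.1) (fun s hs => hdecay (x s) (hne' s hs))

end Curve

/-- Fixed-time convergence of CAPPA: if the proximal step `z` is a contraction
around `x*` with factor `c ∈ (0,1)`, then every solution of the modified
proximal dynamical system `ẋ = h(x)` reaches `x*` at or before the uniform
settling time `T`, independently of the initial condition. -/
theorem stmt_15 (N : ℕ) (z : EuclideanSpace ℝ (Fin N) → EuclideanSpace ℝ (Fin N))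
    (xs : EuclideanSpace ℝ (Fin N)) (c : ℝ) (hc : c ∈ Set.Ioo (0 : ℝ) 1)
    (hcontr : ∀ x, ‖z x - xs‖ ≤ c * ‖x - xs‖)
    (κ₁ κ₂ α₁ α₂ : ℝ) (hκ₁ : 0 < κ₁) (hκ₂ : 0 < κ₂)
    (hα₁ : α₁ ∈ Set.Ioo (1 - Real.log c / Real.log ((1 - c) / (1 + c))) 1 ∩ Set.Ioo (0 : ℝ) 1)
    (hα₂ : 1 < α₂)
    (h : EuclideanSpace ℝ (Fin N) → EuclideanSpace ℝ (Fin N))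
    (hh : ∀ x, x ≠ xs →
      h x = -((κ₁ / ‖x - z x‖ ^ (1 - α₁)) • (x - z x))
        - (κ₂ / ‖x - z x‖ ^ (1 - α₂)) • (x - z x))
    (hhxs : h xs = 0)
    (s₁ s₂ γ₁ γ₂ a₁ a₂ T : ℝ)
    (hs₁ : s₁ = κ₁ / (1 - c) ^ (1 - α₁) * (((1 - c) / (1 + c)) ^ (1 - α₁) - c))
    (hs₂ : s₂ = κ₂ / (1 - c) ^ (1 - α₂) * (((1 - c) / (1 + c)) ^ (1 - α₂) - c))
    (hγ₁ : γ₁ = (1 + α₁) / 2) (hγ₂ : γ₂ = (1 + α₂) / 2)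
    (ha₁ : a₁ = 2 ^ γ₁ * s₁) (ha₂ : a₂ = 2 ^ γ₂ * s₂)
    (hT : T = 1 / (a₁ * (1 - γ₁)) + 1 / (a₂ * (γ₂ - 1)))
    (x : ℝ → EuclideanSpace ℝ (Fin N))
    (hx : ∀ t : ℝ, 0 ≤ t → HasDerivAt x (h (x t)) t) :
    ∀ t : ℝ, T ≤ t → x t = xs := by
  subst hs₁ hs₂ hγ₁ hγ₂ ha₁ ha₂ hT
  exact fun t ht => stmt_15_general hc hcontr hκ₁ hκ₂ ⟨hα₁.2.1.le, hα₁.2.2⟩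
    (lt_rpow_of_lt_log_div_log hc (sub_lt_comm.1 hα₁.1.1)) hα₂ hh hx ht
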